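/- arXiv:1602.05973 — 2 statements merged into one kernel-verified Lean document; each statement's English description precedes it below -/
import Mathlib

section
/- Let n ≥ 1, let A be any type, let f : (ZMod 2)^n → A be any function, and fix t ∈ (ZMod 2)^n. Then, as real numbers, 2^{-2n} · Σ_{y ∈ t^⊥} Σ_{x, x' ∈ (ZMod 2)^n, f(x) = f(x')} (-1)^{(x + x')·y} = (1/2)·(1 + |{x ∈ (ZMod 2)^n : f(x) = f(x + t)}| / 2^n). (This quantity is the probability that one run of Simon's subroutine applied to f outputs a vector u with u·t = 0.) -/
/-!
For a character `ψ`, the indicator of `y ⬝ᵥ t = 0` is the average of `ψ (c * (y ⬝ᵥ t))` over the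
scalars `c`. Summing `ψ ((x - x') ⬝ᵥ y)` over `y ∈ t^⊥` therefore amounts to averaging over `c` the
full character sum at `x - x' + c • t`, which by orthogonality detects `x' = x + c • t`. Among the
pairs with `f x = f x'` this leaves the `x` with `f x = f (x + c • t)`; over `ZMod 2` the scalars
`c = 0` and `c = 1` give the two summands of the formula.
-/

open Finset

lemma addChar_map_sum_eq_prod {ι G M : Type*} [AddCommMonoid G] [CommMonoid M] (ψ : AddChar G M)
    (s : Finset ι) (g : ι → G) : ψ (∑ i ∈ s, g i) = ∏ i ∈ s, ψ (g i) :=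
  map_prod ψ.toMonoidHom (fun i ↦ Multiplicative.ofAdd (g i)) s

section CharacterSums

variable {R K ι : Type*} [CommRing R] [Fintype R] [DecidableEq R] [CommRing K] [IsDomain K]
  [Fintype ι] [DecidableEq ι] {ψ : AddChar R K}

lemma sum_addChar_dotProduct (hψ : ψ.IsPrimitive) (w : ι → R) :
    ∑ y, ψ (w ⬝ᵥ y) = if w = 0 then (Fintype.card R : K) ^ Fintype.card ι else 0 := by
  calc ∑ y, ψ (w ⬝ᵥ y)
      = ∑ y : ι → R, ∏ i, ψ (y i * w i) := by
        simp only [dotProduct, mul_comm (w _), addChar_map_sum_eq_prod]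
    _ = ∏ i, ∑ a, ψ (a * w i) := (Fintype.prod_sum fun i a ↦ ψ (a * w i)).symm
    _ = if w = 0 then (Fintype.card R : K) ^ Fintype.card ι else 0 := by
        simp only [AddChar.sum_mulShift _ hψ, Nat.cast_ite, Nat.cast_zero,
          Fintype.prod_ite_zero, prod_const, card_univ, funext_iff, Pi.zero_apply]

lemma card_mul_sum_addChar_dotProduct_orthogonal (hψ : ψ.IsPrimitive) (t w : ι → R) :
    (Fintype.card R : K) * ∑ y with y ⬝ᵥ t = 0, ψ (w ⬝ᵥ y) =
      ∑ c : R, if w + c • t = 0 then (Fintype.card R : K) ^ Fintype.card ι else 0 := by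
  calc (Fintype.card R : K) * ∑ y with y ⬝ᵥ t = 0, ψ (w ⬝ᵥ y)
      = ∑ y, (∑ c, ψ (c * (y ⬝ᵥ t))) * ψ (w ⬝ᵥ y) := by
        simp only [AddChar.sum_mulShift _ hψ, Nat.cast_ite, Nat.cast_zero, ite_mul, zero_mul,
          mul_sum, ← sum_filter]
    _ = ∑ c, ∑ y, ψ ((w + c • t) ⬝ᵥ y) := by
        simp only [sum_mul]
        rw [sum_comm]
        refine sum_congr rfl fun c _ ↦ sum_congr rfl fun y _ ↦ ?_
        rw [← AddChar.map_add_eq_mul, add_dotProduct, smul_dotProduct, smul_eq_mul,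
          dotProduct_comm t, add_comm]
    _ = _ := by simp only [sum_addChar_dotProduct hψ]

lemma card_mul_sum_addChar_collisions {A : Type*} [DecidableEq A] (hψ : ψ.IsPrimitive)
    (f : (ι → R) → A) (t : ι → R) :
    (Fintype.card R : K) *
        ∑ y with y ⬝ᵥ t = 0, ∑ x, ∑ x' with f x = f x', ψ ((x - x') ⬝ᵥ y) =
      (Fintype.card R : K) ^ Fintype.card ι * ∑ c : R, (#{x | f x = f (x + c • t)} : K) := by
  have sub_add_eq_zero (x x' : ι → R) (c : R) : x - x' + c • t = 0 ↔ x + c • t = x' := by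
    rw [sub_add_eq_add_sub, sub_eq_zero]
  calc (Fintype.card R : K) *
        ∑ y with y ⬝ᵥ t = 0, ∑ x, ∑ x' with f x = f x', ψ ((x - x') ⬝ᵥ y)
      = ∑ x, ∑ x' with f x = f x',
          (Fintype.card R : K) * ∑ y with y ⬝ᵥ t = 0, ψ ((x - x') ⬝ᵥ y) := by
        rw [sum_comm, mul_sum]
        refine sum_congr rfl fun x _ ↦ ?_
        rw [sum_comm, mul_sum]
    _ = ∑ x, ∑ x' with f x = f x', ∑ c : R,
          if x + c • t = x' then (Fintype.card R : K) ^ Fintype.card ι else 0 := by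
        simp only [card_mul_sum_addChar_dotProduct_orthogonal hψ, sub_add_eq_zero]
    _ = ∑ x, ∑ c : R,
          if f x = f (x + c • t) then (Fintype.card R : K) ^ Fintype.card ι else 0 := by
        refine sum_congr rfl fun x _ ↦ ?_
        rw [sum_comm]
        simp only [sum_ite_eq, mem_filter_univ]
    _ = _ := by
        rw [sum_comm, mul_sum]
        simp only [← sum_filter, sum_const, nsmul_eq_mul, mul_comm]

end CharacterSums

theorem simon_subroutine_prob_general {R K ι A : Type*} [CommRing R] [Fintype R] [DecidableEq R]
    [Field K] [CharZero K] [Fintype ι] [DecidableEq ι] [DecidableEq A] {ψ : AddChar R K}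
    (hψ : ψ.IsPrimitive) (f : (ι → R) → A) (t : ι → R) :
    ((Fintype.card R : K) ^ (2 * Fintype.card ι))⁻¹ *
        ∑ y with y ⬝ᵥ t = 0, ∑ x, ∑ x' with f x = f x', ψ ((x - x') ⬝ᵥ y) =
      1 / Fintype.card R *
        ∑ c : R, (#{x | f x = f (x + c • t)} : K) / (Fintype.card R : K) ^ Fintype.card ι := by
  have card_ne_zero : (Fintype.card R : K) ≠ 0 := Nat.cast_ne_zero.mpr Fintype.card_ne_zero
  have collisions := card_mul_sum_addChar_collisions hψ f t
  rw [← sum_div]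
  field_simp
  linear_combination (Fintype.card R : K) ^ Fintype.card ι * collisions

/-- The character `z ↦ (-1) ^ z` of `ZMod 2`, through which the signs in Simon's subroutine become
values of a primitive additive character. -/
noncomputable def signChar : AddChar (ZMod 2) ℝ :=
  AddChar.zmodChar 2 (neg_one_sq (R := ℝ))

lemma signChar_apply (z : ZMod 2) : signChar z = if z = 0 then 1 else -1 := by
  rw [signChar, AddChar.zmodChar_apply]
  obtain rfl | rfl : z = 0 ∨ z = 1 := by decide +revert
  · simp
  · simp [ZMod.val_one]

lemma isPrimitive_signChar : signChar.IsPrimitive :=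
  AddChar.zmodChar_primitive_of_primitive_root 2 (IsPrimitiveRoot.neg_one 0 two_ne_zero.symm)

lemma signChar_sub_dotProduct {ι : Type*} [Fintype ι] (x x' y : ι → ZMod 2) :
    signChar ((x - x') ⬝ᵥ y) = if ∑ i, (x i + x' i) * y i = 0 then 1 else -1 := by
  rw [ZModModule.sub_eq_add, signChar_apply]
  rfl

lemma sum_zmod_two {M : Type*} [AddCommMonoid M] (g : ZMod 2 → M) : ∑ c, g c = g 0 + g 1 :=
  Fin.sum_univ_two g

open scoped Classical in
/-- The probability that one run of Simon's subroutine applied to `f`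
outputs a vector `u` with `u·t = 0`:
`2^{-2n} · Σ_{y ∈ t^⊥} Σ_{x, x' with f(x) = f(x')} (-1)^{(x+x')·y}
  = (1/2)·(1 + |{x : f(x) = f(x+t)}| / 2^n)`. -/
theorem simon_subroutine_prob (n : ℕ) (hn : 1 ≤ n) (A : Type*)
    (f : (Fin n → ZMod 2) → A) (t : Fin n → ZMod 2) :
    ((2 : ℝ) ^ (2 * n))⁻¹ *
      ∑ y ∈ Finset.univ.filter (fun y : Fin n → ZMod 2 => (∑ i, y i * t i) = 0),
        ∑ x : Fin n → ZMod 2,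
          ∑ x' ∈ Finset.univ.filter (fun x' : Fin n → ZMod 2 => f x = f x'),
            (if (∑ i, (x i + x' i) * y i : ZMod 2) = 0 then (1 : ℝ) else -1)
    = (1 / 2) *
        (1 + ((Finset.univ.filter
            (fun x : Fin n → ZMod 2 => f x = f (x + t))).card : ℝ) / 2 ^ n) := by
  simpa [-sub_dotProduct, signChar_sub_dotProduct, sum_zmod_two]
    using! simon_subroutine_prob_general isPrimitive_signChar f t
end

section
/- Let E, P : (ZMod 2)^n → (ZMod 2)^n be functions and k ∈ (ZMod 2)^n satisfying the slide property: for all x, P(E(x)) + k = E(P(x + k)). Define f : ZMod 2 × (ZMod 2)^n → (ZMod 2)^n by f(0, x) = P(E(x)) + x and f(1, x) = E(P(x)) + x. Suppose there exists (τ, t) ∈ ZMod 2 × (ZMod 2)^n with (τ, t) ∉ {(0, 0), (1, k)} such that Pr_{(b,x)}[f(b, x) = f(b + τ, x + t)] > 1/2, where (b, x) is uniform over ZMod 2 × (ZMod 2)^n. Then there exists u ∈ (ZMod 2)^n with u ≠ 0 such that Pr_x[P(E(x)) + P(E(x + u)) = u] > 1/2 or Pr_x[E(P(x)) + E(P(x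 + u)) = u] > 1/2; i.e., P ∘ E or E ∘ P has a differential holding with probability greater than 1/2. -/
/-!
The slide property says that `f` is periodic with period `(1, k)`. Shifting by a multiple of this
period turns a collision of `f` along `(τ, t)` into one along `(0, u)`, where `u = t - τ • k` is
zero only in the two excluded cases. Such a collision stays inside one of the two branches, where
`F x + x = F (x + u) + (x + u)` is the differential `u → u` of `F`; hence the collision probability
is the average of the differential probabilities of the two branches.
-/

open Finset
open scoped BigOperators

section CollisionProbability

variable {α β ι : Type*} [Fintype α] [DecidableEq β]

/-- The probability, over a uniform `x`, that `f` takes the same value at `x` and `x + s`; the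
quantity `ε(f, (1, k))` is its maximum over `s ∉ {0, (1, k)}`. -/
noncomputable def collisionProb [Add α] (f : α → β) (s : α) : ℝ :=
  #{x | f x = f (x + s)} / Fintype.card α

theorem collisionProb_add_of_periodic [AddSemigroup α] {f : α → β} {c : α}
    (hf : Function.Periodic f c) (s : α) : collisionProb f (s + c) = collisionProb f s := by
  simp only [collisionProb, ← add_assoc, hf _]

theorem collisionProb_zero_prod [Fintype ι] [AddZeroClass ι] [Add α] (f : ι × α → β) (u : α) :
    collisionProb f (0, u) = 𝔼 b, collisionProb (fun x => f (b, x)) u := by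
  have card_collisions : #{y : ι × α | f y = f (y + (0, u))} =
      ∑ b, #{x | f (b, x) = f (b, x + u)} := by
    simp only [card_filter, Fintype.sum_prod_type, Prod.mk_add_mk, add_zero]
  simp only [collisionProb, card_collisions, Fintype.expect_eq_sum_div_card, Fintype.card_prod,
    Nat.cast_sum, Nat.cast_mul, ← sum_div, div_div, mul_comm]

end CollisionProbability

theorem periodic_zmod_smul {m : ℕ} [NeZero m] {α β : Type*} [AddCommMonoid α] [Module (ZMod m) α]
    {f : α → β} {c : α} (hf : Function.Periodic f c) (a : ZMod m) :
    Function.Periodic f (a • c) := by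
  rw [← ZMod.natCast_zmod_val a, Nat.cast_smul_eq_nsmul]
  exact hf.nsmul a.val

section Slide

/-- The probability, over a uniform `x`, that the input difference `a` leads to the output
difference `b` through `F`. Differences are written as sums, since `G` is meant to be an
elementary abelian 2-group. -/
noncomputable def differentialProb {G : Type*} [Fintype G] [DecidableEq G] [Add G] (F : G → G)
    (a b : G) : ℝ :=
  #{x | F x + F (x + a) = b} / Fintype.card G

variable {G : Type*} [AddCommGroup G] [Module (ZMod 2) G]

theorem collisionProb_add_id [Fintype G] [DecidableEq G] (F : G → G) (u : G) :
    collisionProb (fun x => F x + x) u = differentialProb F u u := by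
  have collision_iff (x : G) : F x + x = F (x + u) + (x + u) ↔ F x + F (x + u) = u := by
    rw [← add_assoc, add_right_comm, add_right_cancel_iff, ← sub_eq_iff_eq_add',
      ZModModule.sub_eq_add]
  simp only [collisionProb, differentialProb, collision_iff]

theorem sub_smul_ne_zero_of_ne {τ : ZMod 2} {t k : G} (h0 : (τ, t) ≠ (0, 0))
    (h1 : (τ, t) ≠ (1, k)) : t - τ • k ≠ 0 := by
  rw [sub_ne_zero]
  rintro rfl
  fin_cases τ
  · exact h0 (Prod.ext rfl (zero_smul _ k))
  · exact h1 (Prod.ext rfl (one_smul _ k))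

variable {F H : G → G} {k : G} {f : ZMod 2 × G → G}

theorem periodic_of_slide (hslide : ∀ x, F x + k = H (x + k))
    (hf0 : ∀ x, f (0, x) = F x + x) (hf1 : ∀ x, f (1, x) = H x + x) :
    Function.Periodic f (1, k) := by
  have zero_branch (x : G) : f (1, x + k) = f (0, x) := by
    rw [hf1, ← hslide, hf0, add_add_add_comm, ZModModule.add_self, add_zero]
  rintro ⟨b, x⟩
  fin_cases b
  · exact zero_branch x
  · calc f (0, x + k) = f (1, x + k + k) := (zero_branch _).symm
      _ = f (1, x) := by rw [add_assoc, ZModModule.add_self, add_zero]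

theorem slide_epsilon_bound_general [Fintype G] [DecidableEq G]
    (hslide : ∀ x, F x + k = H (x + k))
    (hf0 : ∀ x, f (0, x) = F x + x) (hf1 : ∀ x, f (1, x) = H x + x)
    {τ : ZMod 2} {t : G} (h0 : (τ, t) ≠ (0, 0)) (h1 : (τ, t) ≠ (1, k))
    {p : ℝ} (hp : p < collisionProb f (τ, t)) :
    ∃ u, u ≠ 0 ∧ (p < differentialProb F u u ∨ p < differentialProb H u u) := by
  refine ⟨t - τ • k, sub_smul_ne_zero_of_ne h0 h1, ?_⟩
  have shift_eq : (τ, t) = (0, t - τ • k) + τ • ((1 : ZMod 2), k) := by simp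
  have smul_periodic : Function.Periodic f (τ • (1, k)) :=
    periodic_zmod_smul (periodic_of_slide hslide hf0 hf1) τ
  rw [shift_eq, collisionProb_add_of_periodic smul_periodic, collisionProb_zero_prod] at hp
  obtain ⟨b, -, hb⟩ := exists_lt_of_lt_expect univ_nonempty hp
  fin_cases b
  · left
    rwa [← collisionProb_add_id, ← funext hf0]
  · right
    rwa [← collisionProb_add_id, ← funext hf1]

end Slide

open scoped Classical in
/-- for the slide-attack Simon function `f(0, x) = P(E(x)) + x`,
`f(1, x) = E(P(x)) + x` under the slide property, if some
`(τ, t) ∉ {(0,0), (1,k)}` satisfies `Pr_{(b,x)}[f(b,x) = f(b+τ, x+t)] > 1/2`, then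
`P ∘ E` or `E ∘ P` has a differential `u ≠ 0` holding with probability `> 1/2`. -/
theorem slide_epsilon_bound (n : ℕ)
    (E P : (Fin n → ZMod 2) → (Fin n → ZMod 2)) (k : Fin n → ZMod 2)
    (hslide : ∀ x, P (E x) + k = E (P (x + k)))
    (f : ZMod 2 × (Fin n → ZMod 2) → (Fin n → ZMod 2))
    (hf0 : ∀ x, f (0, x) = P (E x) + x)
    (hf1 : ∀ x, f (1, x) = E (P x) + x)
    (h : ∃ (τ : ZMod 2) (t : Fin n → ZMod 2),
      (τ, t) ≠ ((0 : ZMod 2), (0 : Fin n → ZMod 2)) ∧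
      (τ, t) ≠ ((1 : ZMod 2), k) ∧
      ((Finset.univ.filter (fun bx : ZMod 2 × (Fin n → ZMod 2) =>
          f bx = f (bx.1 + τ, bx.2 + t))).card : ℝ)
          / (Fintype.card (ZMod 2 × (Fin n → ZMod 2)) : ℝ) > 1 / 2) :
    ∃ u : Fin n → ZMod 2, u ≠ 0 ∧
      (((Finset.univ.filter (fun x : Fin n → ZMod 2 =>
          P (E x) + P (E (x + u)) = u)).card : ℝ) / 2 ^ n > 1 / 2 ∨
       ((Finset.univ.filter (fun x : Fin n → ZMod 2 =>
          E (P x) + E (P (x + u)) = u)).card : ℝ) / 2 ^ n > 1 / 2) := by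
  obtain ⟨τ, t, h0, h1, h⟩ := h
  simpa [differentialProb] using slide_epsilon_bound_general hslide hf0 hf1 h0 h1 h
end
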